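/- arXiv:2204.11303 — 2 statements merged into one kernel-verified Lean document; each statement's English description precedes it below -/
import Mathlib

section
/- Let p be a prime and P a generalized extraspecial p-group. Suppose some maximal subgroup M of P is elementary abelian. Then there exist subgroups E and A of P such that E is nonabelian of order p^3, A is elementary abelian, every element of E commutes with every element of A, E ∩ A = 1, and P = EA (so P is the internal direct product E × A). -/
/-!
Since `[P, P]` is a normal subgroup of prime order of a `p`-group, it is central, so for every `x`
the map `g ↦ ⁅x, g⁆` is a homomorphism `P → [P, P]` with kernel `C(x)`. If `x` and `y` do not
commute, both centralizers therefore have index `p`, and `P = E · (C(x) ⊓ C(y))` for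
`E = [P, P]⟨y⟩⟨x⟩`; as all `p`-th powers lie in `Φ(P) = [P, P]`, this `E` has order `p ^ 3` and
meets the center exactly in `[P, P]`. Now choose `y ∈ M` noncentral and `x ∉ M`. Then `C(y) = M`,
so the center is contained in `M`, hence elementary abelian, and it contains `C(x) ⊓ C(y)`. Any
complement `A` of `[P, P]` in the center satisfies `P = E × A`.
-/

open Subgroup hiding commutator
open scoped commutatorElement IsMulCommutative

section Complements

variable {G : Type*} {p : ℕ} [Fact p.Prime]

theorem complementedLattice_subgroup_of_pow_eq_one [CommGroup G] (h : ∀ x : G, x ^ p = 1) :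
    ComplementedLattice (Subgroup G) :=
  letI : Module (ZMod p) (Additive G) := AddCommGroup.zmodModule h
  (Subgroup.toAddSubgroup.trans (AddSubgroup.toZModSubmodule p)).symm.complementedLattice

theorem exists_inf_eq_bot_sup_eq_of_pow_eq_one [Group G] {H K : Subgroup G} [IsMulCommutative K]
    (hK : ∀ x ∈ K, x ^ p = 1) (hHK : H ≤ K) : ∃ A : Subgroup G, H ⊓ A = ⊥ ∧ H ⊔ A = K := by
  have : ComplementedLattice (Subgroup K) :=
    complementedLattice_subgroup_of_pow_eq_one (G := K) fun x ↦ Subtype.ext (hK x x.2)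
  obtain ⟨B, hB⟩ := exists_isCompl (H.subgroupOf K)
  have hmap : (H.subgroupOf K).map K.subtype = H := map_subgroupOf_eq_of_le hHK
  refine ⟨B.map K.subtype, ?_, ?_⟩
  · rw [← hmap, ← map_inf_eq _ _ _ K.subtype_injective, hB.inf_eq_bot, Subgroup.map_bot]
  · rw [← hmap, ← Subgroup.map_sup, hB.sup_eq_top, ← MonoidHom.range_eq_map, K.range_subtype]

end Complements

section PrimeExtensions

variable {G : Type*} [Group G] {p : ℕ} [hp : Fact p.Prime] {H K : Subgroup G} [H.Normal] {g : G}

theorem relIndex_sup_zpowers_of_pow_mem (hpow : g ^ p ∈ H) (hg : g ∉ H) :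
    H.relIndex (H ⊔ zpowers g) = p := by
  have horder : orderOf (g : G ⧸ H) = p :=
    orderOf_eq_prime (by rwa [← QuotientGroup.mk_pow, QuotientGroup.eq_one_iff])
      (by rwa [ne_eq, QuotientGroup.eq_one_iff])
  calc H.relIndex (H ⊔ zpowers g) = (QuotientGroup.mk' H).ker.relIndex (zpowers g) := by
        rw [relIndex_sup_left, QuotientGroup.ker_mk']
    _ = p := by
        rw [relIndex_ker, MonoidHom.map_zpowers, Nat.card_zpowers, QuotientGroup.mk'_apply, horder]

theorem card_sup_zpowers_of_pow_mem (hpow : g ^ p ∈ H) (hg : g ∉ H) :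
    Nat.card (H ⊔ zpowers g : Subgroup G) = Nat.card H * p := by
  rw [← relIndex_sup_zpowers_of_pow_mem hpow hg, ← relIndex_bot_left, ← relIndex_bot_left,
    relIndex_mul_relIndex _ _ _ bot_le le_sup_left]

theorem sup_zpowers_inf_eq_left_of_pow_mem (hpow : g ^ p ∈ H) (hHK : H ≤ K) (hg : g ∉ K) :
    (H ⊔ zpowers g) ⊓ K = H := by
  have hmul := relIndex_mul_relIndex H ((H ⊔ zpowers g) ⊓ K) (H ⊔ zpowers g)
    (le_inf le_sup_left hHK) inf_le_left
  rw [relIndex_sup_zpowers_of_pow_mem hpow fun h ↦ hg (hHK h)] at hmul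
  refine le_antisymm (relIndex_eq_one.mp ?_) (le_inf le_sup_left hHK)
  refine ((Nat.prime_mul_iff.mp (hmul ▸ hp.out)).resolve_left fun h ↦ hg ?_).2
  have hle : H ⊔ zpowers g ≤ (H ⊔ zpowers g) ⊓ K := relIndex_eq_one.mp h.2
  exact (hle (mem_sup_right (mem_zpowers g))).2

end PrimeExtensions

section PGroups

variable {G : Type*} [Group G] {p : ℕ} [hp : Fact p.Prime]

theorem eq_one_of_mem_zpowers_pow_of_isPGroup (hG : IsPGroup p G) {g : G}
    (hg : g ∈ zpowers (g ^ p)) : g = 1 := by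
  by_contra hg1
  exact hp.out.coprime_iff_not_dvd.mp (mem_zpowers_pow_iff.mp hg) (hG.dvd_orderOf hg1)

theorem pow_mem_of_isCoatom_of_isPGroup (hG : IsPGroup p G) {K : Subgroup G} [K.Normal]
    (hK : IsCoatom K) (x : G) : x ^ p ∈ K := by
  by_contra hx
  have htop : K ⊔ zpowers (x ^ p) = ⊤ :=
    hK.2 _ (left_lt_sup.mpr fun hle ↦ hx (hle (mem_zpowers _)))
  obtain ⟨k, hk, z, hz, hkz⟩ := mem_sup_of_normal_left.mp (htop ▸ mem_top x)
  have hxz : (x : G ⧸ K) = z := by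
    rw [← hkz, QuotientGroup.mk_mul, (QuotientGroup.eq_one_iff k).mpr hk, one_mul]
  have hmem : (x : G ⧸ K) ∈ zpowers ((x : G ⧸ K) ^ p) := by
    have := mem_map_of_mem (QuotientGroup.mk' K) hz
    rwa [MonoidHom.map_zpowers, map_pow, QuotientGroup.mk'_apply, QuotientGroup.mk'_apply,
      ← hxz] at this
  have hx1 := eq_one_of_mem_zpowers_pow_of_isPGroup (hG.to_quotient K) hmem
  exact hx (pow_mem ((QuotientGroup.eq_one_iff x).mp hx1) p)

theorem pow_mem_frattini_of_isPGroup (hG : IsPGroup p G) (hfr : commutator G ≤ frattini G)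
    (x : G) : x ^ p ∈ frattini G := by
  simp only [frattini, Order.radical, mem_iInf]
  intro K hK
  have : K.Normal := Normal.of_commutator_le _ (hfr.trans (frattini_le_coatom hK))
  exact pow_mem_of_isCoatom_of_isPGroup hG hK x

theorem le_center_of_card_eq_prime_of_isPGroup (hG : IsPGroup p G) {C : Subgroup G} [C.Normal]
    (hC : Nat.card C = p) : C ≤ center G := by
  have hfin : Finite C := Nat.finite_of_card_ne_zero (hC ▸ hp.out.ne_zero)
  have hG' : IsPGroup p (ConjAct G) := hG
  obtain ⟨b, hb, hb1⟩ := hG'.exists_fixed_point_of_prime_dvd_card_of_fixed_point C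
    hC.symm.dvd (a := 1) smul_one
  have hbcenter : (b : G) ∈ center G := mem_center_iff.mpr fun g ↦
    mul_inv_eq_iff_eq_mul.mp (congrArg Subtype.val (hb (ConjAct.toConjAct g)))
  have hbC : zpowers b ≤ (center G).subgroupOf C := zpowers_le.mpr hbcenter
  rwa [zpowers_eq_top_of_prime_card hC hb1.symm, top_le_iff, subgroupOf_eq_top] at hbC

end PGroups

section CentralCommutator

variable {G : Type*} [Group G]

/-- The homomorphism `g ↦ ⁅x, g⁆` of a group of nilpotency class at most two, which we express as
the commutator subgroup being central. -/
def commutatorHom (hC : commutator G ≤ center G) (x : G) : G →* commutator G :=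
  MonoidHom.mk' (fun g ↦ ⟨⁅x, g⁆, commutator_mem_commutator (mem_top x) (mem_top g)⟩) fun a b ↦ by
    have hcomm : a * ⁅x, b⁆ = ⁅x, b⁆ * a :=
      mem_center_iff.mp (hC (commutator_mem_commutator (mem_top x) (mem_top b))) a
    ext
    change ⁅x, a * b⁆ = ⁅x, a⁆ * ⁅x, b⁆
    rw [commutatorElement_mul_right_eq_mul_conj, mul_assoc ⁅x, a⁆, hcomm, ← mul_assoc,
      mul_inv_cancel_right]

theorem ker_commutatorHom (hC : commutator G ≤ center G) (x : G) :
    (commutatorHom hC x).ker = centralizer {x} := by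
  ext g
  rw [MonoidHom.mem_ker, mem_centralizer_singleton_iff, eq_comm (a := g * x),
    ← commutatorElement_eq_one_iff_mul_comm]
  exact Subtype.ext_iff

/-- The subgroup generated by `[G, G]`, `x` and `y`, which serves as the nonabelian factor of order
`p ^ 3`. It is written as a two-step chain of cyclic extensions of `[G, G]`, along which its order
is computed. -/
def commutatorSpan (x y : G) : Subgroup G :=
  commutator G ⊔ zpowers y ⊔ zpowers x

theorem commutator_le_commutatorSpan (x y : G) : commutator G ≤ commutatorSpan x y :=
  le_sup_left.trans le_sup_left

theorem left_mem_commutatorSpan (x y : G) : x ∈ commutatorSpan x y :=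
  mem_sup_right (mem_zpowers x)

theorem right_mem_commutatorSpan (x y : G) : y ∈ commutatorSpan x y :=
  mem_sup_left (mem_sup_right (mem_zpowers y))

theorem commutator_sup_zpowers_le_centralizer (hC : commutator G ≤ center G) (y : G) :
    commutator G ⊔ zpowers y ≤ centralizer {y} :=
  sup_le (hC.trans (center_le_centralizer _))
    (zpowers_le.mpr (mem_centralizer_singleton_iff.mpr rfl))

variable {p : ℕ} [Fact p.Prime] {x y : G}

theorem centralizer_singleton_sup_zpowers_eq_top (hC : commutator G ≤ center G)
    (hcard : Nat.card (commutator G) = p) (hxy : ¬Commute x y) :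
    centralizer {x} ⊔ zpowers y = ⊤ := by
  have hne : commutatorHom hC x y ≠ 1 := fun h ↦
    hxy (commutatorElement_eq_one_iff_commute.mp (Subtype.ext_iff.mp h))
  rw [← ker_commutatorHom hC, sup_comm, ← comap_map_eq, MonoidHom.map_zpowers,
    zpowers_eq_top_of_prime_card hcard hne, comap_top]

theorem commutatorSpan_sup_inf_centralizer_eq_top (hC : commutator G ≤ center G)
    (hcard : Nat.card (commutator G) = p) (hxy : ¬Commute x y) :
    commutatorSpan x y ⊔ (centralizer {x} ⊓ centralizer {y}) = ⊤ := by
  have hnormal (z : G) : (centralizer {z}).Normal :=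
    Normal.of_commutator_le _ (hC.trans (center_le_centralizer _))
  refine eq_top_iff.mpr fun g _ ↦ ?_
  obtain ⟨a, ha, s, hs, rfl⟩ : ∃ a ∈ centralizer {x}, ∃ s ∈ zpowers y, a * s = g :=
    mem_sup_of_normal_left.mp
      (centralizer_singleton_sup_zpowers_eq_top hC hcard hxy ▸ mem_top g)
  obtain ⟨b, hb, t, ht, rfl⟩ : ∃ b ∈ centralizer {y}, ∃ t ∈ zpowers x, b * t = a :=
    mem_sup_of_normal_left.mp
      (centralizer_singleton_sup_zpowers_eq_top hC hcard (mt Commute.symm hxy) ▸ mem_top a)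
  have htx : t ∈ centralizer {x} :=
    (le_sup_right.trans (commutator_sup_zpowers_le_centralizer hC x)) ht
  have hbx : b ∈ centralizer {x} := (mul_mem_cancel_right htx).mp ha
  exact mul_mem (mul_mem (mem_sup_right ⟨hbx, hb⟩) (mem_sup_left (mem_sup_right ht)))
    (mem_sup_left (mem_sup_left (mem_sup_right hs)))

theorem card_commutatorSpan (hC : commutator G ≤ center G) (hcard : Nat.card (commutator G) = p)
    (hx : x ^ p ∈ commutator G) (hy : y ^ p ∈ commutator G) (hxy : ¬Commute x y) :
    Nat.card (commutatorSpan x y) = p ^ 3 := by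
  have : (commutator G ⊔ zpowers y).Normal := Normal.of_commutator_le _ le_sup_left
  have hyC : y ∉ commutator G := fun h ↦ hxy (mem_center_iff.mp (hC h) x)
  have hxN : x ∉ commutator G ⊔ zpowers y := fun h ↦
    hxy (mem_centralizer_singleton_iff.mp (commutator_sup_zpowers_le_centralizer hC y h))
  rw [commutatorSpan, card_sup_zpowers_of_pow_mem (mem_sup_left hx) hxN,
    card_sup_zpowers_of_pow_mem hy hyC, hcard, pow_three']

theorem commutatorSpan_inf_center (hC : commutator G ≤ center G) (hx : x ^ p ∈ commutator G)
    (hy : y ^ p ∈ commutator G) (hxy : ¬Commute x y) :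
    commutatorSpan x y ⊓ center G = commutator G := by
  have : (commutator G ⊔ zpowers y).Normal := Normal.of_commutator_le _ le_sup_left
  have hyZ : y ∉ center G := fun h ↦ hxy (mem_center_iff.mp h x)
  have hspan : commutatorSpan x y ⊓ centralizer {y} = commutator G ⊔ zpowers y :=
    sup_zpowers_inf_eq_left_of_pow_mem (mem_sup_left hx)
      (commutator_sup_zpowers_le_centralizer hC y) fun h ↦
        hxy (mem_centralizer_singleton_iff.mp h)
  rw [← inf_eq_right.mpr (center_le_centralizer {y}), ← inf_assoc, hspan,
    sup_zpowers_inf_eq_left_of_pow_mem hy hC hyZ]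

end CentralCommutator

section AbelianMaximalSubgroups

variable {G : Type*} [Group G] {M : Subgroup G} {x y : G}

theorem not_le_center_of_isCoatom (hG : center G ≠ ⊤) (hM : IsCoatom M) : ¬M ≤ center G := by
  intro hMZ
  obtain ⟨x, hxM⟩ : ∃ x, x ∉ M := SetLike.exists_not_mem_of_ne_top M hM.1
  have hxtop : centralizer {x} = ⊤ :=
    hM.2 _ (SetLike.lt_iff_le_and_exists.mpr ⟨hMZ.trans (center_le_centralizer _), x,
      mem_centralizer_singleton_iff.mpr rfl, hxM⟩)
  have hxZ : x ∈ center G := centralizer_eq_top_iff_subset.mp hxtop rfl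
  exact hG (hM.2 _ (SetLike.lt_iff_le_and_exists.mpr ⟨hMZ, x, hxZ, hxM⟩))

theorem le_centralizer_singleton_of_mem [IsMulCommutative M] (hy : y ∈ M) :
    M ≤ centralizer {y} :=
  M.le_centralizer.trans (centralizer_le (Set.singleton_subset_iff.mpr hy))

theorem centralizer_singleton_eq_of_isCoatom [IsMulCommutative M] (hM : IsCoatom M) (hy : y ∈ M)
    (hyZ : y ∉ center G) : centralizer {y} = M :=
  (hM.le_iff.mp (le_centralizer_singleton_of_mem hy)).resolve_left fun h ↦
    hyZ (centralizer_eq_top_iff_subset.mp h rfl)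

theorem exists_not_commute_of_isCoatom [IsMulCommutative M] (hG : center G ≠ ⊤)
    (hM : IsCoatom M) : ∃ x ∉ M, ∃ y ∈ M, ¬Commute x y := by
  obtain ⟨x, hx⟩ : ∃ x, x ∉ M := SetLike.exists_not_mem_of_ne_top M hM.1
  obtain ⟨y, hy, hyZ⟩ := SetLike.not_le_iff_exists.mp (not_le_center_of_isCoatom hG hM)
  refine ⟨x, hx, y, hy, fun hxy ↦ hx ?_⟩
  rw [← centralizer_singleton_eq_of_isCoatom hM hy hyZ]
  exact mem_centralizer_singleton_iff.mpr hxy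

theorem centralizer_singleton_inf_le_center_of_isCoatom [IsMulCommutative M] (hM : IsCoatom M)
    (hx : x ∉ M) : centralizer {x} ⊓ M ≤ center G := by
  rintro d ⟨hdx, hdM⟩
  have hxd : x ∈ centralizer {d} :=
    mem_centralizer_singleton_iff.mpr (mem_centralizer_singleton_iff.mp hdx).symm
  by_contra hdZ
  exact hx (centralizer_singleton_eq_of_isCoatom hM hdM hdZ ▸ hxd)

end AbelianMaximalSubgroups

theorem stmt_6_general {P : Type*} [Group P] (p : ℕ) (hp : p.Prime)
    (hpgrp : IsPGroup p P)
    (hges1 : frattini P = commutator P) (hges2 : Nat.card (commutator P) = p)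
    (M : Subgroup P) (hM : IsCoatom M)
    (hMab : ∀ x ∈ M, ∀ y ∈ M, x * y = y * x) (hMexp : ∀ x ∈ M, x ^ p = 1) :
    ∃ E A : Subgroup P,
      (∃ x ∈ E, ∃ y ∈ E, x * y ≠ y * x) ∧ Nat.card E = p ^ 3 ∧
      (∀ x ∈ A, ∀ y ∈ A, x * y = y * x) ∧ (∀ x ∈ A, x ^ p = 1) ∧
      (∀ x ∈ E, ∀ y ∈ A, x * y = y * x) ∧ E ⊓ A = ⊥ ∧ E ⊔ A = ⊤ := by
  have := Fact.mk hp
  have : IsMulCommutative M := .of_setLike_mul_comm hMab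
  have hC : commutator P ≤ center P := le_center_of_card_eq_prime_of_isPGroup hpgrp hges2
  have hpow (g : P) : g ^ p ∈ commutator P := hges1 ▸ pow_mem_frattini_of_isPGroup hpgrp hges1.ge g
  have hcenter : center P ≠ ⊤ := fun h ↦ hp.ne_one <| by
    rw [← hges2, (commutator_eq_bot_iff_center_eq_top P).mpr h, card_bot]
  obtain ⟨x, hxM, y, hyM, hxy⟩ := exists_not_commute_of_isCoatom hcenter hM
  have hyC : centralizer {y} = M :=
    centralizer_singleton_eq_of_isCoatom hM hyM fun h ↦ hxy (mem_center_iff.mp h x)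
  have hZM : center P ≤ M := hyC ▸ center_le_centralizer _
  obtain ⟨A, hCA, hCAZ⟩ := exists_inf_eq_bot_sup_eq_of_pow_eq_one (fun z hz ↦ hMexp z (hZM hz)) hC
  have hAZ : A ≤ center P := hCAZ ▸ le_sup_right
  refine ⟨commutatorSpan x y, A,
    ⟨x, left_mem_commutatorSpan x y, y, right_mem_commutatorSpan x y, hxy⟩,
    card_commutatorSpan hC hges2 (hpow x) (hpow y) hxy,
    fun a _ b hb ↦ mem_center_iff.mp (hAZ hb) a, fun a ha ↦ hMexp a (hZM (hAZ ha)),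
    fun e _ a ha ↦ mem_center_iff.mp (hAZ ha) e, ?_, ?_⟩
  · rw [← inf_eq_right.mpr hAZ, ← inf_assoc,
      commutatorSpan_inf_center hC (hpow x) (hpow y) hxy, hCA]
  · rw [← sup_eq_left.mpr (commutator_le_commutatorSpan x y), sup_assoc, hCAZ, eq_top_iff,
      ← commutatorSpan_sup_inf_centralizer_eq_top hC hges2 hxy, hyC]
    exact sup_le_sup_left (centralizer_singleton_inf_le_center_of_isCoatom hM hxM) _

theorem stmt_6 {P : Type*} [Group P] [Finite P] (p : ℕ) (hp : p.Prime)
    (hpgrp : IsPGroup p P)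
    (hges1 : frattini P = commutator P) (hges2 : Nat.card (commutator P) = p)
    (M : Subgroup P) (hM : IsCoatom M)
    (hMab : ∀ x ∈ M, ∀ y ∈ M, x * y = y * x) (hMexp : ∀ x ∈ M, x ^ p = 1) :
    ∃ E A : Subgroup P,
      (∃ x ∈ E, ∃ y ∈ E, x * y ≠ y * x) ∧ Nat.card E = p ^ 3 ∧
      (∀ x ∈ A, ∀ y ∈ A, x * y = y * x) ∧ (∀ x ∈ A, x ^ p = 1) ∧
      (∀ x ∈ E, ∀ y ∈ A, x * y = y * x) ∧ E ⊓ A = ⊥ ∧ E ⊔ A = ⊤ :=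
  stmt_6_general p hp hpgrp hges1 hges2 M hM hMab hMexp
end

section
/- Let p be an odd prime and P a finite metacyclic p-group. If the automorphism group Aut(P) does not have a normal Sylow p-subgroup, then P is homocyclic abelian of rank 2, i.e. P is isomorphic to C_{p^n} × C_{p^n} for some n ≥ 1. Equivalently, if P is not isomorphic to C_{p^n} × C_{p^n} for any n, then Aut(P) has a normal Sylow p-subgroup. -/
/-!
For a `p`-group `P` of rank at most two with a characteristic subgroup `M` of index `p`, the
automorphisms acting trivially on the sections `P / M` and `M / Φ(P)` form a `p`-group by a coprime
action argument. Both sections have order dividing `p`, so this normal `p`-subgroup has index prime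
to `p`, and `Aut P` is `p`-closed.

It remains to analyse the `P` without a characteristic subgroup of index `p`. Whenever `x ↦ x ^ n`
is an endomorphism with cyclic image, the preimages of the subgroups of that image are
characteristic, so the image must be trivial. If `P` is abelian, taking `n = exp(P) / p` shows that
`P` is homocyclic. If `P` has class at most two, take `n = exp(P / P')`: as `p` is odd, `x ↦ x ^ n`
is an endomorphism, and its image lies in `P'`, which is cyclic. Hence `x ^ n = 1` for all `x`,
while the independence of the two generators modulo `P'` makes every element of `P' ≤ ⟨a⟩` a power
of `a ^ n`; so `P' = 1`. Applied to `P / [P', P]`, this gives `P' = [P', P]`, whence `P' = 1` by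
nilpotency.
-/

section Frattini

variable {G : Type*} [Group G]

theorem isCoatom_of_prime_index {M : Subgroup G} (hM : M.index.Prime) : IsCoatom M := by
  refine ⟨fun htop ↦ hM.ne_one (Subgroup.index_eq_one.2 htop), fun K hMK ↦ ?_⟩
  have hmul := Subgroup.relIndex_mul_index hMK.le
  have hrel : M.relIndex K ≠ 1 := fun h ↦ hMK.not_ge (Subgroup.relIndex_eq_one.1 h)
  rw [← hmul] at hM
  exact Subgroup.index_eq_one.1 ((Nat.prime_mul_iff.1 hM).resolve_right fun h ↦ hrel h.2).2

theorem isSimpleGroup_quotient_of_isCoatom {M : Subgroup G} [M.Normal] (hM : IsCoatom M) :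
    IsSimpleGroup (G ⧸ M) where
  exists_pair_ne := (QuotientGroup.nontrivial_iff.2 hM.1).exists_pair_ne
  eq_bot_or_eq_top_of_normal H _ := by
    have hle : M ≤ H.comap (QuotientGroup.mk' M) := QuotientGroup.le_comap_mk' M H
    have hmap := Subgroup.map_comap_eq_self_of_surjective (QuotientGroup.mk'_surjective M) H
    rcases hM.le_iff.1 hle with htop | heq
    · right
      rw [← hmap, htop, Subgroup.map_top_of_surjective _ (QuotientGroup.mk'_surjective M)]
    · left
      rw [← hmap, heq, QuotientGroup.map_mk'_self]

theorem normal_of_isCoatom [Group.IsNilpotent G] {M : Subgroup G} (hM : IsCoatom M) : M.Normal :=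
  Subgroup.NormalizerCondition.normal_of_coatom M Group.normalizerCondition_of_isNilpotent hM

theorem prime_index_of_isCoatom [Group.IsNilpotent G] {M : Subgroup G} (hM : IsCoatom M) :
    M.index.Prime := by
  have := normal_of_isCoatom hM
  have := isSimpleGroup_quotient_of_isCoatom hM
  exact Group.is_simple_iff_prime_card.1 this

theorem commutator_le_frattini [Group.IsNilpotent G] : commutator G ≤ frattini G := by
  refine le_iInf₂ fun M hM ↦ ?_
  have := normal_of_isCoatom hM
  have := isSimpleGroup_quotient_of_isCoatom hM
  rw [← Subgroup.Normal.quotient_commutative_iff_commutator_le]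
  infer_instance

variable [Finite G] {p : ℕ} [Fact p.Prime]

theorem index_eq_of_isCoatom (hG : IsPGroup p G) {M : Subgroup G} (hM : IsCoatom M) :
    M.index = p := by
  have := hG.isNilpotent
  have hprime := prime_index_of_isCoatom hM
  obtain ⟨n, hn⟩ := hG.index M
  exact (Nat.prime_dvd_prime_iff_eq hprime Fact.out).1 (hprime.dvd_of_dvd_pow hn.dvd)

theorem pow_mem_frattini (hG : IsPGroup p G) (x : G) : x ^ p ∈ frattini G := by
  have := hG.isNilpotent
  simp only [frattini, Order.radical, Subgroup.mem_iInf]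
  intro M hM
  have := normal_of_isCoatom hM
  rw [← index_eq_of_isCoatom hG hM]
  exact Subgroup.pow_index_mem M x

theorem index_frattini_dvd_pow_rank (hG : IsPGroup p G) :
    (frattini G).index ∣ p ^ Group.rank G := by
  have := hG.isNilpotent
  have : IsMulCommutative (G ⧸ frattini G) :=
    Subgroup.Normal.quotient_commutative_iff_commutator_le.2 commutator_le_frattini
  let _ : CommGroup (G ⧸ frattini G) := { mul_comm := mul_comm' }
  have hpow : ∀ x : G ⧸ frattini G, x ^ p = 1 := by
    intro x
    induction x using QuotientGroup.induction_on with | H x => ?_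
    exact (QuotientGroup.eq_one_iff _).2 (pow_mem_frattini hG x)
  exact (card_dvd_exponent_pow_rank' _ hpow).trans
    (pow_dvd_pow p (Group.rank_le_of_surjective _ (QuotientGroup.mk'_surjective (frattini G))))

end Frattini

section SectionAutomorphisms

theorem exists_normal_sylow_of_isPGroup_ker {p : ℕ} [Fact p.Prime] {A B : Type*} [Group A]
    [Group B] (φ : A →* B) (hker : IsPGroup p φ.ker) (hB : (Nat.card B).Coprime p) :
    ∃ Q : Sylow p A, (Q : Subgroup A).Normal := by
  have hindex : ¬ p ∣ φ.ker.index := by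
    rw [Subgroup.index_ker]
    exact fun h ↦ (Fact.out : p.Prime).coprime_iff_not_dvd.1 hB.symm
      (h.trans (Subgroup.card_subgroup_dvd_card φ.range))
  exact ⟨hker.toSylow hindex, inferInstanceAs φ.ker.Normal⟩

theorem coprime_card_mulAut_of_card_dvd_prime {C : Type*} [Group C] {p : ℕ} [hp : Fact p.Prime]
    (hC : Nat.card C ∣ p) : (Nat.card (MulAut C)).Coprime p := by
  have := isCyclic_of_card_dvd_prime hC
  have : Finite C := Nat.finite_of_card_ne_zero (ne_zero_of_dvd_ne_zero hp.out.ne_zero hC)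
  rw [IsCyclic.card_mulAut]
  rcases (Nat.dvd_prime hp.out).1 hC with h | h
  · simp [h]
  · rw [h, Nat.totient_prime hp.out, Nat.coprime_self_sub_left hp.out.one_le]
    exact Nat.coprime_one_left p

variable {G : Type*} [Group G]

/-- The automorphism of the section `H / (H ∩ N)` induced by an automorphism of `G`, for
characteristic subgroups `H` and `N`. -/
def sectionMulAut (H N : Subgroup G) [H.Characteristic] [N.Characteristic] :
    MulAut G →* MulAut (H ⧸ N.subgroupOf H) where
  toFun σ := QuotientGroup.congr _ _ (MulAut.characteristic H σ) <| by
    ext y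
    constructor
    · rintro ⟨x, hx, rfl⟩
      exact Subgroup.characteristic_iff_le_comap.1 ‹N.Characteristic› σ hx
    · exact fun hy ↦ ⟨(MulAut.characteristic H σ).symm y,
        Subgroup.characteristic_iff_le_comap.1 ‹N.Characteristic› σ.symm hy,
        MulEquiv.apply_symm_apply _ y⟩
  map_one' := by
    ext x
    induction x using QuotientGroup.induction_on
    rfl
  map_mul' σ τ := by
    ext x
    induction x using QuotientGroup.induction_on
    rfl

theorem inv_mul_apply_mem_of_mem_ker_sectionMulAut {H N : Subgroup G} [H.Characteristic]
    [N.Characteristic] {σ : MulAut G} (hσ : σ ∈ (sectionMulAut H N).ker) {x : G} (hx : x ∈ H) :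
    x⁻¹ * σ x ∈ N := by
  have h : ((⟨x, hx⟩ : H) : H ⧸ N.subgroupOf H) = MulAut.characteristic H σ ⟨x, hx⟩ :=
    (DFunLike.congr_fun (MonoidHom.mem_ker.1 hσ) _).symm
  exact (QuotientGroup.eq (s := N.subgroupOf H)).1 h

/-- The subgroup of points fixed by an automorphism. -/
def fixedSubgroup (σ : MulAut G) : Subgroup G :=
  MonoidHom.eqLocus σ.toMonoidHom (MonoidHom.id G)

-- The coset `xN` is `σ`-invariant and its size is prime to `q`, so `σ` fixes one of its points.
theorem mem_fixedSubgroup_sup_of_inv_mul_apply_mem {σ : MulAut G} {q n : ℕ} [Fact q.Prime]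
    (hσ : σ ^ q ^ n = 1) {N : Subgroup G} [N.Characteristic] [Finite N] (hN : ¬ q ∣ Nat.card N)
    {x : G} (hx : x⁻¹ * σ x ∈ N) : x ∈ fixedSubgroup σ ⊔ N := by
  classical
  have hinv (y : G) : x⁻¹ * σ y ∈ N ↔ x⁻¹ * y ∈ N := by
    have heq : x⁻¹ * σ y = (x⁻¹ * σ x) * σ (x⁻¹ * y) := by
      rw [map_mul, map_inv, mul_assoc, mul_inv_cancel_left]
    rw [heq, Subgroup.mul_mem_cancel_left N hx]
    exact SetLike.ext_iff.1 (Subgroup.characteristic_iff_comap_eq.1 ‹_› σ) _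
  let e : {y // x⁻¹ * y ∈ N} ≃ N := (Equiv.mulLeft x⁻¹).subtypeEquiv fun _ ↦ Iff.rfl
  have := Fintype.ofFinite N
  have := Fintype.ofEquiv N e.symm
  let τ : Equiv.Perm {y // x⁻¹ * y ∈ N} := Equiv.Perm.subtypePerm (MulAut.toPerm G σ) hinv
  have hτ : τ ^ q ^ n = 1 := by
    rw [Equiv.Perm.subtypePerm_pow (MulAut.toPerm G σ) (q ^ n) hinv]
    simp only [← map_pow, hσ, map_one]
    rfl
  obtain ⟨⟨y, hy⟩, hfix⟩ := Equiv.Perm.exists_fixed_point_of_prime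
    (by rwa [← Nat.card_eq_fintype_card, Nat.card_congr e]) hτ
  have hyfix : y ∈ fixedSubgroup σ := congrArg Subtype.val hfix
  have := mul_mem (Subgroup.mem_sup_left hyfix) (Subgroup.mem_sup_right (inv_mem hy))
  rwa [mul_inv_rev, inv_inv, mul_inv_cancel_left] at this

variable [Finite G] {p : ℕ} [Fact p.Prime]

theorem eq_one_of_mem_ker_sectionMulAut (hG : IsPGroup p G) {M : Subgroup G} [M.Characteristic]
    {q n : ℕ} [Fact q.Prime] (hqp : q ≠ p) {σ : MulAut G} (hσ : σ ^ q ^ n = 1)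
    (htop : σ ∈ (sectionMulAut ⊤ M).ker) (hM : σ ∈ (sectionMulAut M (frattini G)).ker) :
    σ = 1 := by
  have hcard (N : Subgroup G) : ¬ q ∣ Nat.card N := fun hq ↦ by
    obtain ⟨k, hk⟩ := IsPGroup.iff_card.1 (hG.to_subgroup N)
    rw [hk] at hq
    exact hqp ((Nat.prime_dvd_prime_iff_eq Fact.out Fact.out).1
      ((Fact.out : q.Prime).dvd_of_dvd_pow hq))
  have htop_le : ⊤ ≤ fixedSubgroup σ ⊔ M := fun x hx ↦
    mem_fixedSubgroup_sup_of_inv_mul_apply_mem hσ (hcard M)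
      (inv_mul_apply_mem_of_mem_ker_sectionMulAut htop hx)
  have hM_le : M ≤ fixedSubgroup σ ⊔ frattini G := fun x hx ↦
    mem_fixedSubgroup_sup_of_inv_mul_apply_mem hσ (hcard _)
      (inv_mul_apply_mem_of_mem_ker_sectionMulAut hM hx)
  have hfix : fixedSubgroup σ = ⊤ := frattini_nongenerating <|
    top_le_iff.1 (htop_le.trans (sup_le le_sup_left hM_le))
  ext x
  exact hfix.ge (Subgroup.mem_top x)

theorem isPGroup_ker_sectionMulAut_prod (hG : IsPGroup p G) (M : Subgroup G) [M.Characteristic] :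
    IsPGroup p ((sectionMulAut ⊤ M).prod (sectionMulAut M (frattini G))).ker := by
  rw [isPGroup_iff_primeFactors_card_subset (Fact.out : p.Prime).ne_zero]
  intro q hq
  have hqprime := Nat.prime_of_mem_primeFactors hq
  have := Fact.mk hqprime
  rw [Nat.Prime.primeFactors Fact.out, Finset.mem_singleton]
  by_contra hqp
  obtain ⟨⟨σ, hσ⟩, horder⟩ := exists_prime_orderOf_dvd_card' q (Nat.dvd_of_mem_primeFactors hq)
  rw [Subgroup.orderOf_mk] at horder
  rw [MonoidHom.ker_prod] at hσ
  have hσ_one : σ = 1 := eq_one_of_mem_ker_sectionMulAut hG hqp (n := 1)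
    (by rw [pow_one, ← horder, pow_orderOf_eq_one]) hσ.1 hσ.2
  exact hqprime.ne_one (by rw [← horder, hσ_one, orderOf_one])

theorem exists_normal_sylow_mulAut_of_characteristic (hG : IsPGroup p G)
    (hrank : Group.rank G ≤ 2) {M : Subgroup G} [M.Characteristic] (hM : M.index = p) :
    ∃ Q : Sylow p (MulAut G), (Q : Subgroup (MulAut G)).Normal := by
  have hp : p.Prime := Fact.out
  have hcoatom : IsCoatom M := isCoatom_of_prime_index (hM ▸ hp)
  have htop : M.relIndex ⊤ ∣ p := by rw [Subgroup.relIndex_top_right, hM]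
  have hfrattini : (frattini G).relIndex M ∣ p := by
    have h := (index_frattini_dvd_pow_rank hG).trans (pow_dvd_pow p hrank)
    rw [← Subgroup.relIndex_mul_index (frattini_le_coatom hcoatom), hM, sq] at h
    exact Nat.dvd_of_mul_dvd_mul_right hp.pos h
  refine exists_normal_sylow_of_isPGroup_ker _ (isPGroup_ker_sectionMulAut_prod hG M) ?_
  rw [Nat.card_prod]
  exact (coprime_card_mulAut_of_card_dvd_prime htop).mul_left
    (coprime_card_mulAut_of_card_dvd_prime hfrattini)

end SectionAutomorphisms

section NoCharacteristicSubgroup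

/-- No characteristic subgroup of `G` has index `n`. -/
def NoCharacteristicSubgroupOfIndex (n : ℕ) (G : Type*) [Group G] : Prop :=
  ∀ M : Subgroup G, M.Characteristic → M.index ≠ n

variable {G : Type*} [Group G] {n p : ℕ}

theorem NoCharacteristicSubgroupOfIndex.quotient (h : NoCharacteristicSubgroupOfIndex n G)
    (N : Subgroup G) [N.Characteristic] : NoCharacteristicSubgroupOfIndex n (G ⧸ N) := by
  intro M hM hindex
  refine h (M.comap (QuotientGroup.mk' N)) (Subgroup.Characteristic.comap_quotient_mk hM) ?_
  rw [Subgroup.index_comap_of_surjective _ (QuotientGroup.mk'_surjective N), hindex]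

theorem exists_characteristic_index_eq_of_dvd_card_range {f : G →* G} (hf : ∀ x, f x = x ^ n)
    [IsCyclic f.range] [Finite f.range] {d : ℕ} (hd : d ∣ Nat.card f.range) :
    ∃ M : Subgroup G, M.Characteristic ∧ M.index = d := by
  let _ : CommGroup f.range := IsCyclic.commGroup
  let k := Nat.card f.range / d
  let g : G →* f.range := (powMonoidHom k).comp f.rangeRestrict
  have hker (x : G) : x ∈ g.ker ↔ (x ^ n) ^ k = 1 := by
    rw [← hf, MonoidHom.mem_ker, Subtype.ext_iff]
    rfl
  refine ⟨g.ker, Subgroup.characteristic_iff_le_comap.2 fun σ x hx ↦ ?_, ?_⟩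
  · rw [Subgroup.mem_comap, hker]
    simp only [MulEquiv.coe_toMonoidHom, ← map_pow, (hker x).1 hx, map_one]
  · have hrange : g.range = (powMonoidHom k).range := by
      rw [MonoidHom.range_comp, MonoidHom.range_eq_top.2 f.rangeRestrict_surjective,
        ← MonoidHom.range_eq_map]
    rw [Subgroup.index_ker, hrange, IsCyclic.card_powMonoidHom_range,
      Nat.gcd_eq_right (Nat.div_dvd_of_dvd hd), Nat.div_div_self hd Nat.card_pos.ne']

theorem pow_eq_one_of_isCyclic_range [Fact p.Prime] (hG : IsPGroup p G)
    (hchar : NoCharacteristicSubgroupOfIndex p G) {f : G →* G} (hf : ∀ x, f x = x ^ n)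
    [IsCyclic f.range] [Finite f.range] (x : G) : x ^ n = 1 := by
  rcases (hG.to_subgroup f.range).card_eq_or_dvd with hcard | hdvd
  · rw [← hf, ← Subgroup.mem_bot, ← Subgroup.card_eq_one.1 hcard]
    exact ⟨x, rfl⟩
  · obtain ⟨M, hM, hindex⟩ := exists_characteristic_index_eq_of_dvd_card_range hf hdvd
    exact absurd hindex (hchar M hM)

end NoCharacteristicSubgroup

theorem closure_pair_map_eq_top_of_surjective {G H : Type*} [Group G] [Group H] {f : G →* H}
    (hf : Function.Surjective f) {a b : G} (hab : Subgroup.closure {a, b} = ⊤) :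
    Subgroup.closure {f a, f b} = ⊤ := by
  rw [← Set.image_pair, ← MonoidHom.map_closure, hab, Subgroup.map_top_of_surjective f hf]

section Abelian

variable {G : Type*} [CommGroup G] {p : ℕ}

theorem mem_zpowers_of_zpow_mul_zpow_eq_one [Fact p.Prime] {u v : G} (hu : u ^ p = 1) {i j : ℤ}
    (hi : ¬ (p : ℤ) ∣ i) (huv : u ^ i * v ^ j = 1) : u ∈ Subgroup.zpowers v := by
  have hui : u ^ i ∈ Subgroup.zpowers v :=
    ⟨-j, by simpa only [zpow_neg] using (eq_inv_of_mul_eq_one_left huv).symm⟩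
  obtain ⟨s, t, hst⟩ : IsCoprime (p : ℤ) i :=
    (Nat.prime_iff_prime_int.1 Fact.out).coprime_iff_not_dvd.2 hi
  have hu_eq : u = (u ^ i) ^ t := by
    calc u = u ^ (s * p + t * i) := by rw [hst, zpow_one]
      _ = (u ^ i) ^ t := by
        rw [zpow_add, mul_comm s, zpow_mul, zpow_natCast, hu, one_zpow, one_mul, mul_comm t,
          zpow_mul]
  rw [hu_eq]
  exact zpow_mem hui t

theorem dvd_of_zpow_mul_zpow_eq_one_of_not_isCyclic [Fact p.Prime] {u v : G} (hu : u ^ p = 1)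
    (hv : v ^ p = 1) (hcyc : ¬ IsCyclic (Subgroup.closure {u, v})) {i j : ℤ}
    (huv : u ^ i * v ^ j = 1) : (p : ℤ) ∣ i ∧ (p : ℤ) ∣ j := by
  have hnot (w : G) (huw : u ∈ Subgroup.zpowers w) (hvw : v ∈ Subgroup.zpowers w) : False :=
    hcyc <| Subgroup.isCyclic_of_le (H' := Subgroup.zpowers w) <|
      (Subgroup.closure_le _).2 (Set.pair_subset huw hvw)
  constructor
  · by_contra hi
    exact hnot v (mem_zpowers_of_zpow_mul_zpow_eq_one hu hi huv) (Subgroup.mem_zpowers v)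
  · by_contra hj
    exact hnot u (Subgroup.mem_zpowers u)
      (mem_zpowers_of_zpow_mul_zpow_eq_one hv hj (by rwa [mul_comm]))

theorem pow_succ_dvd_of_zpow_mul_zpow_eq_one {a b : G} {s : ℕ}
    (hs : ∀ i j : ℤ, (a ^ p ^ s) ^ i * (b ^ p ^ s) ^ j = 1 → (p : ℤ) ∣ i ∧ (p : ℤ) ∣ j)
    {i j : ℤ} (hab : a ^ i * b ^ j = 1) : (p : ℤ) ^ (s + 1) ∣ i ∧ (p : ℤ) ^ (s + 1) ∣ j := by
  suffices ∀ k ≤ s + 1, (p : ℤ) ^ k ∣ i ∧ (p : ℤ) ^ k ∣ j from this _ le_rfl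
  intro k hk
  induction k with
  | zero => simp
  | succ k ih =>
    obtain ⟨⟨i', rfl⟩, ⟨j', rfl⟩⟩ := ih (by omega)
    have hexp (c : G) (m : ℤ) : (c ^ p ^ s) ^ m = (c ^ ((p : ℤ) ^ k * m)) ^ p ^ (s - k) := by
      obtain ⟨d, rfl⟩ := Nat.exists_eq_add_of_le (Nat.le_of_succ_le_succ hk)
      rw [Nat.add_sub_cancel_left, ← zpow_natCast c, ← zpow_natCast _ (p ^ d), ← zpow_mul,
        ← zpow_mul]
      push_cast
      ring_nf
    have hraise : (a ^ p ^ s) ^ i' * (b ^ p ^ s) ^ j' = 1 := by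
      rw [hexp, hexp, ← mul_pow, hab, one_pow]
    obtain ⟨hi, hj⟩ := hs i' j' hraise
    rw [pow_succ]
    exact ⟨mul_dvd_mul_left _ hi, mul_dvd_mul_left _ hj⟩

theorem exponent_dvd_of_zpow_mul_zpow_eq_one [Finite G] [Fact p.Prime] (hG : IsPGroup p G)
    (hchar : NoCharacteristicSubgroupOfIndex p G) {a b : G}
    (hab : Subgroup.closure {a, b} = ⊤) {i j : ℤ} (hij : a ^ i * b ^ j = 1) :
    (Monoid.exponent G : ℤ) ∣ i ∧ (Monoid.exponent G : ℤ) ∣ j := by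
  obtain ⟨t, ht⟩ := isPGroup_iff_exponent_eq_pow.1 hG
  rcases t with _ | s
  · simp [ht]
  have hpow (x : G) : (x ^ p ^ s) ^ p = 1 := by
    rw [← pow_mul, ← pow_succ, ← ht, Monoid.pow_exponent_eq_one]
  have hrange :
      Subgroup.closure {a ^ p ^ s, b ^ p ^ s} = (powMonoidHom (p ^ s) : G →* G).range := by
    rw [MonoidHom.range_eq_map, ← hab, MonoidHom.map_closure, Set.image_pair]
    rfl
  have hcyc : ¬ IsCyclic (Subgroup.closure {a ^ p ^ s, b ^ p ^ s}) := fun h ↦ by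
    rw [hrange] at h
    have hdvd := Monoid.exponent_dvd_of_forall_pow_eq_one
      (pow_eq_one_of_isCyclic_range hG hchar (f := powMonoidHom (p ^ s)) fun _ ↦ rfl)
    rw [ht, Nat.pow_dvd_pow_iff_le_right (Fact.out : p.Prime).one_lt] at hdvd
    omega
  rw [ht, Nat.cast_pow]
  exact pow_succ_dvd_of_zpow_mul_zpow_eq_one
    (fun _ _ ↦ dvd_of_zpow_mul_zpow_eq_one_of_not_isCyclic (hpow a) (hpow b) hcyc) hij

theorem nonempty_mulEquiv_zmod_prod_zmod {n : ℕ} {a b : G} (hab : Subgroup.closure {a, b} = ⊤)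
    (hn : ∀ x : G, x ^ n = 1)
    (hindep : ∀ i j : ℤ, a ^ i * b ^ j = 1 → (n : ℤ) ∣ i ∧ (n : ℤ) ∣ j) :
    Nonempty (G ≃* Multiplicative (ZMod n) × Multiplicative (ZMod n)) := by
  have horder_a : orderOf a = n := Nat.dvd_antisymm (orderOf_dvd_of_pow_eq_one (hn a)) <|
    Int.natCast_dvd_natCast.1 (hindep (orderOf a) 0 (by simp [pow_orderOf_eq_one])).1
  have horder_b : orderOf b = n := Nat.dvd_antisymm (orderOf_dvd_of_pow_eq_one (hn b)) <|
    Int.natCast_dvd_natCast.1 (hindep 0 (orderOf b) (by simp [pow_orderOf_eq_one])).2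
  let f := (Subgroup.zpowers a).subtype.coprod (Subgroup.zpowers b).subtype
  have hinj : Function.Injective f := by
    rw [injective_iff_map_eq_one]
    rintro ⟨⟨_, i, rfl⟩, ⟨_, j, rfl⟩⟩ hij
    obtain ⟨hi, hj⟩ := hindep i j hij
    rw [← horder_a, orderOf_dvd_iff_zpow_eq_one] at hi
    rw [← horder_b, orderOf_dvd_iff_zpow_eq_one] at hj
    exact Prod.ext (Subtype.ext hi) (Subtype.ext hj)
  have hsurj : Function.Surjective f := fun x ↦ by
    obtain ⟨i, j, rfl⟩ := Subgroup.mem_closure_pair.1 (hab.ge (Subgroup.mem_top x))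
    exact ⟨(⟨a ^ i, i, rfl⟩, ⟨b ^ j, j, rfl⟩), rfl⟩
  let e (c : G) (hc : orderOf c = n) : Multiplicative (ZMod n) ≃* Subgroup.zpowers c :=
    zmodMulEquivOfGenerator (g := ⟨c, Subgroup.mem_zpowers c⟩)
      (by rintro ⟨_, i, rfl⟩; exact ⟨i, rfl⟩) (by rw [Nat.card_zpowers, hc])
  exact ⟨(MulEquiv.ofBijective f ⟨hinj, hsurj⟩).symm.trans
    ((e a horder_a).prodCongr (e b horder_b)).symm⟩

end Abelian

open scoped commutatorElement

section Commutator

variable {G : Type*} [Group G]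

theorem pow_mul_eq_of_mul_eq_mul_mul {x y z : G} (hy : Commute z y)
    (h : y * x = x * y * z) (n : ℕ) : y ^ n * x = x * y ^ n * z ^ n := by
  have hconj : SemiconjBy x (y * z) y := by rw [SemiconjBy, h, mul_assoc]
  rw [mul_assoc, ← hy.symm.mul_pow]
  exact (hconj.pow_right n).eq.symm

theorem mul_pow_eq_mul_pow_choose_two {x y z : G} (hx : Commute z x) (hy : Commute z y)
    (h : y * x = x * y * z) (n : ℕ) : (x * y) ^ n = x ^ n * y ^ n * z ^ n.choose 2 := by
  induction n with
  | zero => simp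
  | succ n ih =>
    have hxy : Commute (z ^ n.choose 2) (x * y) := (hx.mul_right hy).pow_left _
    have hzy : Commute (z ^ n) y := hy.pow_left _
    calc (x * y) ^ (n + 1) = x ^ n * y ^ n * (z ^ n.choose 2 * (x * y)) := by
          rw [pow_succ, ih, mul_assoc]
      _ = x ^ n * (y ^ n * x) * y * z ^ n.choose 2 := by simp only [hxy.eq, mul_assoc]
      _ = x ^ n * x * y ^ n * (z ^ n * y) * z ^ n.choose 2 := by
          simp only [pow_mul_eq_of_mul_eq_mul_mul hy h, mul_assoc]
      _ = x ^ (n + 1) * y ^ (n + 1) * z ^ (n + 1).choose 2 := by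
          rw [hzy.eq, Nat.choose_succ_succ' n 1, Nat.choose_one_right]
          simp only [pow_add z, pow_succ, mul_assoc]

theorem dvd_choose_two_of_odd {n : ℕ} (hn : Odd n) : n ∣ n.choose 2 := by
  rw [Nat.choose_two_right, Nat.mul_div_assoc]
  · exact dvd_mul_right _ _
  · exact (Nat.Odd.sub_odd hn odd_one).two_dvd

theorem mul_pow_of_pow_mem_center (hG : commutator G ≤ Subgroup.center G) {n : ℕ} (hn : Odd n)
    (hpow : ∀ x : G, x ^ n ∈ Subgroup.center G) (x y : G) : (x * y) ^ n = x ^ n * y ^ n := by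
  let z := ⁅y⁻¹, x⁻¹⁆
  have hz_mem : z ∈ commutator G :=
    Subgroup.commutator_mem_commutator (Subgroup.mem_top _) (Subgroup.mem_top _)
  have hz (w : G) : Commute z w := (Subgroup.mem_center_iff.1 (hG hz_mem) w).symm
  have hswap : y * x = x * y * z := by simp [z, commutatorElement_def, mul_assoc]
  have hzn : z ^ n = 1 := by
    have h := pow_mul_eq_of_mul_eq_mul_mul (hz y) hswap n
    rwa [Subgroup.mem_center_iff.1 (hpow y) x, left_eq_mul] at h
  obtain ⟨k, hk⟩ := dvd_choose_two_of_odd hn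
  rw [mul_pow_eq_mul_pow_choose_two (hz x) (hz y) hswap, hk, pow_mul, hzn, one_pow, mul_one]

theorem eq_bot_of_le_commutator_top [Group.IsNilpotent G] {H : Subgroup G}
    (hH : H ≤ ⁅H, (⊤ : Subgroup G)⁆) : H = ⊥ := by
  obtain ⟨n, hn⟩ := Subgroup.nilpotent_iff_lowerCentralSeries.1 ‹Group.IsNilpotent G›
  rw [eq_bot_iff, ← hn]
  clear hn
  induction n with
  | zero => exact le_top
  | succ n ih => exact hH.trans (Subgroup.commutator_mono ih le_rfl)

variable [Finite G] {p : ℕ} [Fact p.Prime]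

theorem commutator_eq_bot_of_commutator_le_center (hodd : Odd p) (hG : IsPGroup p G)
    (hchar : NoCharacteristicSubgroupOfIndex p G) {a b : G} (hab : Subgroup.closure {a, b} = ⊤)
    (hcenter : commutator G ≤ Subgroup.center G) (hcyc : commutator G ≤ Subgroup.zpowers a) :
    commutator G = ⊥ := by
  let e := Monoid.exponent (Abelianization G)
  have hAb : IsPGroup p (Abelianization G) := hG.to_quotient (commutator G)
  have hpow_mem (x : G) : x ^ e ∈ commutator G := by
    rw [← Abelianization.ker_of, MonoidHom.mem_ker, map_pow, Monoid.pow_exponent_eq_one]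
  have he_odd : Odd e := by
    obtain ⟨r, hr⟩ := isPGroup_iff_exponent_eq_pow.1 hAb
    exact (congrArg Odd hr).mpr hodd.pow
  let f : G →* G := MonoidHom.mk' (· ^ e)
    (mul_pow_of_pow_mem_center hcenter he_odd fun x ↦ hcenter (hpow_mem x))
  have hrange : f.range ≤ Subgroup.zpowers a := by
    rintro _ ⟨x, rfl⟩
    exact hcyc (hpow_mem x)
  have := Subgroup.isCyclic_of_le hrange
  have hpow_e := pow_eq_one_of_isCyclic_range hG hchar (f := f) fun _ ↦ rfl
  rw [eq_bot_iff]
  intro g hg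
  obtain ⟨i, rfl⟩ := hcyc hg
  have hrel : Abelianization.of a ^ i * Abelianization.of b ^ (0 : ℤ) = 1 := by
    rw [zpow_zero, mul_one, ← map_zpow, ← MonoidHom.mem_ker, Abelianization.ker_of]
    exact hg
  obtain ⟨k, rfl⟩ := (exponent_dvd_of_zpow_mul_zpow_eq_one hAb (hchar.quotient (commutator G))
    (closure_pair_map_eq_top_of_surjective (QuotientGroup.mk'_surjective _) hab) hrel).1
  rw [Subgroup.mem_bot]
  change a ^ ((e : ℤ) * k) = 1
  rw [zpow_mul, zpow_natCast, hpow_e, one_zpow]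

theorem commutator_eq_bot_of_commutator_le_zpowers (hodd : Odd p) (hG : IsPGroup p G)
    (hchar : NoCharacteristicSubgroupOfIndex p G) {a b : G} (hab : Subgroup.closure {a, b} = ⊤)
    (hcyc : commutator G ≤ Subgroup.zpowers a) : commutator G = ⊥ := by
  have := hG.isNilpotent
  let N : Subgroup G := ⁅commutator G, (⊤ : Subgroup G)⁆
  have hN : N.Characteristic := Subgroup.commutator_characteristic _ _
  let π := QuotientGroup.mk' N
  have hπ : Function.Surjective π := QuotientGroup.mk'_surjective N
  have hmap : (commutator G).map π = commutator (G ⧸ N) := by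
    rw [map_commutator_eq, MonoidHom.range_eq_top.2 hπ, commutator_def (G ⧸ N)]
  have hcenter : commutator (G ⧸ N) ≤ Subgroup.center (G ⧸ N) := by
    rw [← Subgroup.centralizer_univ, ← Subgroup.coe_top,
      ← Subgroup.commutator_eq_bot_iff_le_centralizer, ← hmap,
      ← Subgroup.map_top_of_surjective π hπ, ← Subgroup.map_commutator]
    exact QuotientGroup.map_mk'_self N
  have hbot := commutator_eq_bot_of_commutator_le_center hodd (hG.to_quotient N) (hchar.quotient N)
    (closure_pair_map_eq_top_of_surjective hπ hab) hcenter (by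
      rw [← hmap, ← MonoidHom.map_zpowers]
      exact Subgroup.map_mono hcyc)
  rw [← hmap, Subgroup.map_eq_bot_iff, QuotientGroup.ker_mk'] at hbot
  exact eq_bot_of_le_commutator_top hbot

end Commutator

theorem exists_closure_pair_eq_top_of_isCyclic {G : Type*} [Group G] (N : Subgroup G) [N.Normal]
    [IsCyclic N] [IsCyclic (G ⧸ N)] :
    ∃ a b : G, Subgroup.closure {a, b} = ⊤ ∧ Subgroup.zpowers a = N := by
  obtain ⟨a, ha⟩ := (Subgroup.isCyclic_iff_exists_zpowers_eq_top N).1 ‹_›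
  obtain ⟨c, hc⟩ := IsCyclic.exists_generator (α := G ⧸ N)
  obtain ⟨b, rfl⟩ := QuotientGroup.mk'_surjective N c
  refine ⟨a, b, top_le_iff.1 fun x _ ↦ ?_, ha⟩
  obtain ⟨i, hi⟩ := hc x
  have hx : (b ^ i)⁻¹ * x ∈ Subgroup.zpowers a := ha ▸ QuotientGroup.eq.1 hi
  have ha_mem : a ∈ Subgroup.closure {a, b} := Subgroup.subset_closure (Set.mem_insert a _)
  have hb_mem : b ∈ Subgroup.closure {a, b} := Subgroup.subset_closure (Set.mem_insert_of_mem a rfl)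
  have := mul_mem (zpow_mem hb_mem i) (Subgroup.zpowers_le.2 ha_mem hx)
  rwa [mul_inv_cancel_left] at this

theorem rank_le_two_of_closure_pair_eq_top {G : Type*} [Group G] [Group.FG G] {a b : G}
    (hab : Subgroup.closure {a, b} = ⊤) : Group.rank G ≤ 2 := by
  classical
  exact (Group.rank_le (S := {a, b}) (by rwa [Finset.coe_pair])).trans Finset.card_le_two

theorem exists_normal_sylow_mulAut_of_subsingleton (p : ℕ) {G : Type*} [Group G] [Subsingleton G] :
    ∃ Q : Sylow p (MulAut G), (Q : Subgroup (MulAut G)).Normal := by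
  have : Subsingleton (MulAut G) := ⟨fun _ _ ↦ MulEquiv.ext fun _ ↦ Subsingleton.elim _ _⟩
  obtain ⟨Q⟩ : Nonempty (Sylow p (MulAut G)) := inferInstance
  exact ⟨Q, ⟨fun x hx g ↦ Subsingleton.elim x (g * x * g⁻¹) ▸ hx⟩⟩

theorem stmt_9 {P : Type*} [Group P] [Finite P] (p : ℕ) [Fact p.Prime]
    (hodd : Odd p) (hpgrp : IsPGroup p P)
    (hmeta : ∃ (N : Subgroup P) (_ : N.Normal), IsCyclic N ∧ IsCyclic (P ⧸ N))
    (hA : ¬ ∃ Q : Sylow p (MulAut P), (Q : Subgroup (MulAut P)).Normal) :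
    ∃ n : ℕ, 1 ≤ n ∧
      Nonempty (P ≃* Multiplicative (ZMod (p ^ n)) × Multiplicative (ZMod (p ^ n))) := by
  obtain ⟨N, _, _, _⟩ := hmeta
  obtain ⟨a, b, hab, ha⟩ := exists_closure_pair_eq_top_of_isCyclic N
  have hchar : NoCharacteristicSubgroupOfIndex p P := fun M _ hM ↦
    hA (exists_normal_sylow_mulAut_of_characteristic hpgrp
      (rank_le_two_of_closure_pair_eq_top hab) hM)
  have hcyc : commutator P ≤ Subgroup.zpowers a := ha ▸
    Subgroup.Normal.quotient_commutative_iff_commutator_le.1 IsCyclic.isMulCommutative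
  have : IsMulCommutative P := (commutator_eq_bot_iff P).1 <|
    commutator_eq_bot_of_commutator_le_zpowers hodd hpgrp hchar hab hcyc
  let _ : CommGroup P := { mul_comm := mul_comm' }
  obtain ⟨n, hn⟩ := isPGroup_iff_exponent_eq_pow.1 hpgrp
  refine ⟨n, Nat.one_le_iff_ne_zero.2 fun hn_zero ↦ ?_, hn ▸
    nonempty_mulEquiv_zmod_prod_zmod hab Monoid.pow_exponent_eq_one fun _ _ ↦
      exponent_dvd_of_zpow_mul_zpow_eq_one hpgrp hchar hab⟩
  have : Subsingleton P := Monoid.exp_eq_one_iff.1 (by rw [hn, hn_zero, pow_zero])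
  exact hA (exists_normal_sylow_mulAut_of_subsingleton p)
end
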